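/- The GHZ target function f(z) = ⊕_{i=1}^{n-1} z_i z_{i+1} ⊕ ⊕_{i=1}^{n} z_i on F_2^n has all Walsh coefficients of magnitude either 0 or 2^(⌈n/2⌉); in particular its nonlinearity is 2^(n-1) - 2^(⌈n/2⌉-1), and for n even the function is bent. -/

import Mathlib

/-- Inner product over F_2. -/
def bip {n : ℕ} (x y : Fin n → ZMod 2) : ZMod 2 := ∑ i, x i * y i

/-- Walsh-Hadamard transform of a Boolean function f : F_2^n → F_2. -/
def walsh {n : ℕ} (f : (Fin n → ZMod 2) → ZMod 2) (y : Fin n → ZMod 2) : ℤ :=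
  ∑ x, (-1 : ℤ) ^ (bip x y + f x).val

/-- Hamming distance between the truth tables of two Boolean functions. -/
def hdist {n : ℕ} (f g : (Fin n → ZMod 2) → ZMod 2) : ℕ :=
  (Finset.univ.filter fun x => f x ≠ g x).card

/-- Nonlinearity: minimum Hamming distance from f to the set of affine
functions L_{a,b}(x) = a ⊕ ⟨b,x⟩. -/
def nonlinearity {n : ℕ} (f : (Fin n → ZMod 2) → ZMod 2) : ℕ :=
  Finset.univ.inf' ⟨((0 : ZMod 2), (0 : Fin n → ZMod 2)), Finset.mem_univ _⟩
    (fun p : ZMod 2 × (Fin n → ZMod 2) => hdist f (fun x => p.1 + bip p.2 x))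

/-- Sign character. -/
def chi (a : ZMod 2) : ℤ := (-1) ^ a.val

/-- Extension of a vector by zero. -/
def ext0 {n : ℕ} (z : Fin n → ZMod 2) (i : ℕ) : ZMod 2 := if h : i < n then z ⟨i, h⟩ else 0

/-- The path quadratic form. -/
def pathQ {n : ℕ} (z : Fin n → ZMod 2) : ZMod 2 :=
  ∑ i ∈ Finset.range n, ext0 z i * ext0 z (i + 1)

/-- Exponential sum of the path form with a linear part. -/
def pathW (n : ℕ) (a : Fin n → ZMod 2) : ℤ := ∑ z : Fin n → ZMod 2, chi (pathQ z + ∑ i, a i * z i)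

lemma chi_add (a b : ZMod 2) : chi (a + b) = chi a * chi b := by
  revert a b; decide

lemma chi_cases (a : ZMod 2) : chi a = 1 ∨ chi a = -1 := by
  revert a; decide

lemma ext0_cons_zero {n : ℕ} (u : ZMod 2) (z : Fin n → ZMod 2) :
    ext0 (Fin.cons u z : Fin (n + 1) → ZMod 2) 0 = u := by
  simp [ext0]

lemma ext0_cons_succ {n : ℕ} (u : ZMod 2) (z : Fin n → ZMod 2) (i : ℕ) :
    ext0 (Fin.cons u z : Fin (n + 1) → ZMod 2) (i + 1) = ext0 z i := by
  by_cases h : i < n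
  · have : (⟨i + 1, by omega⟩ : Fin (n + 1)) = Fin.succ ⟨i, h⟩ := rfl
    simp only [ext0, h, Nat.add_lt_add_iff_right, dif_pos, this, Fin.cons_succ]
  · simp [ext0, h]

lemma pathQ_cons {n : ℕ} (u : ZMod 2) (z : Fin n → ZMod 2) :
    pathQ (Fin.cons u z : Fin (n + 1) → ZMod 2) = u * ext0 z 0 + pathQ z := by
  unfold pathQ
  rw [Finset.sum_range_succ', add_comm]
  simp only [ext0_cons_succ, ext0_cons_zero, zero_add]

lemma sum_cons {n : ℕ} (F : (Fin (n + 1) → ZMod 2) → ℤ) :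
    ∑ z, F z = ∑ w : Fin n → ZMod 2, ∑ u : ZMod 2, F (Fin.cons u w) := by
  rw [← (Fin.consEquiv (fun _ : Fin (n + 1) => ZMod 2)).sum_comp, Fintype.sum_prod_type_right]
  rfl

/-- Reduced linear part. -/
def redA {n : ℕ} (a : Fin (n + 2) → ZMod 2) (i : Fin n) : ZMod 2 :=
  a i.succ.succ + if i.val = 0 then a 0 else 0

lemma redA_sum {n : ℕ} (a : Fin (n + 2) → ZMod 2) (w : Fin n → ZMod 2) :
    ∑ i, redA a i * w i = a 0 * ext0 w 0 + ∑ i, a i.succ.succ * w i := by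
  simp only [redA, add_mul, Finset.sum_add_distrib]
  rw [add_comm]
  congr 1
  cases n with
  | zero => simp [ext0]
  | succ n => simp [ext0]

lemma key (a0 a1 h R : ZMod 2) :
    ∑ v : ZMod 2, ∑ u : ZMod 2, chi (u * v + v * h + R + (a0 * u + a1 * v))
      = 2 * chi (a0 * a1) * chi (R + a0 * h) := by
  revert a0 a1 h R; decide

lemma pathW_rec (n : ℕ) (a : Fin (n + 2) → ZMod 2) :
    pathW (n + 2) a = 2 * chi (a 0 * a 1) * pathW n (redA a) := by
  unfold pathW
  rw [sum_cons, sum_cons, Finset.mul_sum]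
  refine Finset.sum_congr rfl fun w _ => ?_
  rw [redA_sum]
  have := key (a 0) (a 1) (ext0 w 0) (pathQ w + ∑ i, a i.succ.succ * w i)
  rw [show pathQ w + (a 0 * ext0 w 0 + ∑ i, a i.succ.succ * w i)
    = pathQ w + ∑ i, a i.succ.succ * w i + a 0 * ext0 w 0 by ring, ← this]
  refine Finset.sum_congr rfl fun v _ => Finset.sum_congr rfl fun u _ => ?_
  congr 1
  simp only [pathQ_cons, ext0_cons_zero, Fin.sum_univ_succ, Fin.cons_zero, Fin.cons_succ]
  simp only [Fin.succ_zero_eq_one]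
  ring

lemma pathW_zero (a : Fin 0 → ZMod 2) : pathW 0 a = 1 := by
  simp [pathW, pathQ, chi]

lemma pathW_one (a : Fin 1 → ZMod 2) : pathW 1 a = 1 + chi (a 0) := by
  unfold pathW
  rw [sum_cons]
  simp only [pathQ_cons]
  have : ∀ c : ZMod 2, ∑ u : ZMod 2, chi (c * u) = 1 + chi c := by decide
  simpa [pathQ, ext0] using this (a 0)

lemma pathW_spec : ∀ (n : ℕ) (a : Fin n → ZMod 2),
    (pathW n a = 0 ∧ ¬ Even n) ∨ |pathW n a| = 2 ^ ((n + 1) / 2)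
  | 0, a => by right; simp [pathW_zero]
  | 1, a => by
      rw [pathW_one]
      rcases chi_cases (a 0) with h | h <;> simp [h]
  | n + 2, a => by
      rw [pathW_rec]
      have e : (n + 2 + 1) / 2 = (n + 1) / 2 + 1 := by omega
      rcases pathW_spec n (redA a) with ⟨h, h'⟩ | h
      · left
        refine ⟨by simp [h], ?_⟩
        rw [Nat.even_add]; simpa using h'
      · right
        rw [abs_mul, h, e, pow_succ, mul_comm]
        rcases chi_cases (a 0 * a 1) with h | h <;> simp [h]

lemma pathW_at_zero : ∀ (n : ℕ), pathW n 0 = 2 ^ ((n + 1) / 2)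
  | 0 => by simp [pathW_zero]
  | 1 => by rw [pathW_one]; simp [chi]
  | n + 2 => by
      have e : (n + 2 + 1) / 2 = (n + 1) / 2 + 1 := by omega
      have r : redA (0 : Fin (n + 2) → ZMod 2) = 0 := by
        funext i; simp [redA]
      rw [pathW_rec, r, pathW_at_zero n, e, pow_succ]
      simp [chi]; ring

lemma attach_eq (n : ℕ) (z : Fin n → ZMod 2)
    (p : ∀ i : {x // x ∈ Finset.range (n - 1)}, i.1 < n)
    (q : ∀ i : {x // x ∈ Finset.range (n - 1)}, i.1 + 1 < n) :
    (∑ i ∈ (Finset.range (n - 1)).attach, z ⟨i.1, p i⟩ * z ⟨i.1 + 1, q i⟩) = pathQ z := by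
  have h1 : pathQ z = ∑ i ∈ Finset.range (n - 1), ext0 z i * ext0 z (i + 1) := by
    unfold pathQ
    cases n with
    | zero => rfl
    | succ n => rw [Finset.sum_range_succ]; simp [ext0]
  rw [h1, ← Finset.sum_attach (Finset.range (n - 1)) (fun i => ext0 z i * ext0 z (i + 1))]
  refine Finset.sum_congr rfl fun i _ => ?_
  have := Finset.mem_range.mp i.2
  rw [ext0, ext0, dif_pos, dif_pos]

lemma hdist_eq {n : ℕ} (f : (Fin n → ZMod 2) → ZMod 2) (p : ZMod 2) (b : Fin n → ZMod 2) :
    (2 * hdist f (fun x => p + bip b x) : ℤ) = 2 ^ n - chi p * walsh f b := by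
  have c : (2 : ℤ) ^ n = ∑ x : Fin n → ZMod 2, 1 := by simp [ZMod.card]
  unfold hdist walsh
  rw [Finset.card_filter, c, Finset.mul_sum, ← Finset.sum_sub_distrib]
  push_cast
  rw [Finset.mul_sum]
  refine Finset.sum_congr rfl fun x _ => ?_
  have hb : bip x b = bip b x := by simp [bip, mul_comm]
  rw [hb]
  generalize bip b x = s
  generalize f x = t
  change _ = 1 - chi p * chi (s + t)
  revert p s t
  decide

/-- the GHZ target function
f(z) = ⊕_{i=1}^{n-1} z_i z_{i+1} ⊕ ⊕_{i=1}^n z_i has Walsh coefficients of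
magnitude 0 or 2^⌈n/2⌉; its nonlinearity is 2^(n-1) - 2^(⌈n/2⌉-1), and for
n even it is bent (|W_f(y)| = 2^(n/2) for all y). -/
theorem ghz_walsh_spectrum (n : ℕ) (f : (Fin n → ZMod 2) → ZMod 2)
    (hf : ∀ z : Fin n → ZMod 2,
      f z = (∑ i ∈ (Finset.range (n - 1)).attach,
          z ⟨i.1, by have := Finset.mem_range.mp i.2; omega⟩ *
          z ⟨i.1 + 1, by have := Finset.mem_range.mp i.2; omega⟩) +
        ∑ i, z i) :
    (∀ y, walsh f y = 0 ∨ |walsh f y| = 2 ^ ((n + 1) / 2)) ∧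
    nonlinearity f = 2 ^ (n - 1) - 2 ^ ((n + 1) / 2 - 1) ∧
    (Even n → ∀ y, |walsh f y| = 2 ^ (n / 2)) := by
  have hw : ∀ y, walsh f y = pathW n (fun i => y i + 1) := by
    intro y
    unfold walsh pathW
    refine Finset.sum_congr rfl fun x _ => ?_
    rw [hf, attach_eq]
    change chi _ = chi _
    congr 1
    simp only [bip, add_mul, one_mul, Finset.sum_add_distrib]
    rw [Finset.sum_congr rfl fun i _ => mul_comm (x i) (y i)]
    ring
  have h1 : ∀ y, (walsh f y = 0 ∧ ¬ Even n) ∨ |walsh f y| = 2 ^ ((n + 1) / 2) := by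
    intro y; rw [hw]; exact pathW_spec n _
  have hmax : walsh f (fun _ => 1) = 2 ^ ((n + 1) / 2) := by
    rw [hw, ← pathW_at_zero]
    congr 1
  have hpow : 2 * 2 ^ (n - 1) - 2 * 2 ^ ((n + 1) / 2 - 1) = (2 : ℤ) ^ n - 2 ^ ((n + 1) / 2) := by
    rcases Nat.eq_zero_or_pos n with h | h
    · subst h; simp
    · rw [← pow_succ', ← pow_succ', Nat.sub_add_cancel h,
        Nat.sub_add_cancel (by omega : 1 ≤ (n + 1) / 2)]
  have hle : 2 ^ ((n + 1) / 2 - 1) ≤ 2 ^ (n - 1) := Nat.pow_le_pow_right (by norm_num) (by omega)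
  have hv : ((2 ^ (n - 1) - 2 ^ ((n + 1) / 2 - 1) : ℕ) : ℤ)
      = 2 ^ (n - 1) - 2 ^ ((n + 1) / 2 - 1) := by
    push_cast [Nat.cast_sub hle]; rfl
  refine ⟨fun y => (h1 y).imp (fun h => h.1) id, ?_, ?_⟩
  · apply le_antisymm
    · refine (Finset.inf'_le _ (Finset.mem_univ ((0 : ZMod 2), fun _ => (1 : ZMod 2)))).trans ?_
      have := hdist_eq f 0 (fun _ => 1)
      rw [hmax, show chi 0 = 1 from rfl] at this
      zify
      rw [hv]
      linarith
    · refine Finset.le_inf' _ _ fun p _ => ?_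
      have := hdist_eq f p.1 p.2
      have hb : |walsh f p.2| ≤ 2 ^ ((n + 1) / 2) := by
        rcases h1 p.2 with h | h
        · rw [h.1]; simp
        · exact h.le
      have hb := abs_le.mp hb
      zify
      rw [hv]
      rcases chi_cases p.1 with h | h <;> rw [h] at this <;> linarith [hb.1, hb.2]
  · intro he y
    rcases h1 y with h | h
    · exact absurd he h.2
    · rw [h]; congr 1
      obtain ⟨k, rfl⟩ := he
      omega
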